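/- Let R = ⊕_{i≥0} R_i be a Noetherian commutative ring graded by the natural numbers, M a finitely generated graded R-module, x ∈ R_1 a non-nilpotent element, and A = R/(1−x). Then tr_R(M)·A = tr_A(M ⊗_R A), i.e., the extension of the trace ideal of M along the projection R → A equals the trace ideal of the A-module M ⊗_R A. -/

import Mathlib

open scoped TensorProduct DirectSum

noncomputable section

/-- The trace ideal of an `R`-module `M`: the sum of the images of all
`R`-linear maps `M → R`. -/
def traceIdeal (R : Type*) [CommRing R] (M : Type*) [AddCommGroup M] [Module R M] :
    Ideal R :=
  ⨆ f : M →ₗ[R] R, LinearMap.range f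

theorem hom_lift_aux
    (R : Type*) [CommRing R] [IsNoetherianRing R]
    (𝒜 : ℕ → AddSubgroup R) [GradedRing 𝒜]
    (M : Type*) [AddCommGroup M] [Module R M] [Module.Finite R M]
    (ℳ : ℕ → AddSubgroup M) [SetLike.GradedSMul 𝒜 ℳ] [DirectSum.Decomposition ℳ]
    (x : R) (hx : x ∈ 𝒜 1) (g : M →ₗ[R] R ⧸ Ideal.span {1 - x}) :
    ∃ f : M →ₗ[R] R, ∀ m, Ideal.Quotient.mk (Ideal.span {1 - x}) (f m) = g m := by
  classical
  let L := Localization.Away x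
  let y : L := IsLocalization.Away.invSelf x
  have hxy : algebraMap R L x * y = 1 := IsLocalization.Away.mul_invSelf x
  -- the dehomogenization map
  let φ₁ : (⨁ i, 𝒜 i) →+* L := DirectSum.toSemiring
    (fun i => (AddMonoidHom.mulRight (y ^ i)).comp
      ((algebraMap R L).toAddMonoidHom.comp (𝒜 i).subtype))
    (by simp) (by
      intro i j a b
      simp [pow_add]
      ring)
  let φ₀ : R →+* L := φ₁.comp (DirectSum.decomposeRingEquiv 𝒜).toRingHom
  have hφ₀ : ∀ i (a : R), a ∈ 𝒜 i → φ₀ a = algebraMap R L a * y ^ i := by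
    intro i a ha
    change φ₁ (DirectSum.decompose 𝒜 a) = _
    rw [DirectSum.decompose_of_mem 𝒜 ha]
    simp [φ₁]
  have hφx : ∀ a ∈ Ideal.span {1 - x}, φ₀ a = 0 := by
    intro a ha
    obtain ⟨b, rfl⟩ := Ideal.mem_span_singleton.1 ha
    rw [map_mul, map_sub, map_one, hφ₀ 1 x hx, pow_one, hxy]
    simp
  let φ : R ⧸ Ideal.span {1 - x} →+* L := Ideal.Quotient.lift _ φ₀ hφx
  have hmkx : Ideal.Quotient.mk (Ideal.span {1 - x}) x = 1 := by
    rw [← map_one (Ideal.Quotient.mk (Ideal.span {1 - x})), eq_comm, Ideal.Quotient.eq]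
    exact Ideal.mem_span_singleton_self _
  let ψ : L →+* R ⧸ Ideal.span {1 - x} :=
    IsLocalization.Away.lift x (g := Ideal.Quotient.mk (Ideal.span {1 - x}))
      (by rw [hmkx]; exact isUnit_one)
  have hψ : ∀ a, ψ (algebraMap R L a) = Ideal.Quotient.mk _ a := fun a =>
    IsLocalization.Away.lift_eq x _ a
  have hψy : ψ y = 1 := by
    have := congrArg ψ hxy
    rw [map_mul, hψ, hmkx, one_mul, map_one] at this
    exact this
  have hψφ : ∀ a, ψ (φ a) = a := by
    intro a
    obtain ⟨r, rfl⟩ := Ideal.Quotient.mk_surjective a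
    change ψ (φ₀ r) = _
    induction r using DirectSum.Decomposition.inductionOn 𝒜 with
    | zero => simp
    | homogeneous a => rw [hφ₀ _ _ a.2, map_mul, hψ, map_pow, hψy]; simp
    | add a b ha hb => rw [map_add, map_add, ha, hb, map_add]
  let G₀ : M →+ L := (DirectSum.toAddMonoid (fun i =>
    (AddMonoidHom.mulRight (algebraMap R L x ^ i)).comp
      ((φ.toAddMonoidHom.comp g.toAddMonoidHom).comp (ℳ i).subtype))).comp
      (DirectSum.decomposeAddEquiv ℳ).toAddMonoidHom
  have hG₀ : ∀ i (m : M), m ∈ ℳ i → G₀ m = φ (g m) * algebraMap R L x ^ i := by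
    intro i m hm
    change DirectSum.toAddMonoid _ (DirectSum.decompose ℳ m) = _
    rw [DirectSum.decompose_of_mem ℳ hm]
    simp
  have hsmul : ∀ (r : R) (m : M), G₀ (r • m) = r • G₀ m := by
    intro r m
    induction r using DirectSum.Decomposition.inductionOn 𝒜 with
    | zero => simp
    | add a b ha hb => rw [add_smul, map_add, ha, hb, add_smul]
    | @homogeneous i a =>
      induction m using DirectSum.Decomposition.inductionOn ℳ with
      | zero => simp
      | add m n hm hn => rw [smul_add, map_add, hm, hn, map_add, smul_add]
      | @homogeneous j m =>
        have h1 : (a : R) • (m : M) ∈ ℳ (i + j) := SetLike.GradedSMul.smul_mem a.2 m.2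
        have h2 : φ (g ((a : R) • (m : M))) = algebraMap R L a * y ^ i * φ (g m) := by
          rw [map_smul, Algebra.smul_def, map_mul, ← hφ₀ i _ a.2]
          rfl
        rw [hG₀ _ _ h1, hG₀ _ _ m.2, h2, Algebra.smul_def, pow_add]
        have h3 : y ^ i * algebraMap R L x ^ i = 1 := by
          rw [← mul_pow, mul_comm, hxy, one_pow]
        linear_combination (algebraMap R L a * φ (g m) * algebraMap R L x ^ j) * h3
  let G : M →ₗ[R] L := { G₀ with map_smul' := hsmul }
  have hψG : ∀ m, ψ (G m) = g m := by
    intro m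
    change ψ (G₀ m) = _
    induction m using DirectSum.Decomposition.inductionOn ℳ with
    | zero => simp
    | add m n hm hn => rw [map_add, map_add, hm, hn, map_add]
    | homogeneous m => rw [hG₀ _ _ m.2, map_mul, hψφ, map_pow, hψ, hmkx, one_pow, mul_one]
  haveI : Module.FinitePresentation R M := Module.finitePresentation_of_finite R M
  obtain ⟨f, ⟨s, k, rfl⟩, hf⟩ := Module.FinitePresentation.exists_lift_of_isLocalizedModule
    (Submonoid.powers x) (Algebra.linearMap R L) G
  refine ⟨f, fun m => ?_⟩
  have h := congrArg ψ (LinearMap.congr_fun hf m)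
  simp only [LinearMap.comp_apply, Algebra.linearMap_apply, hψ] at h
  rw [h, LinearMap.smul_apply, Submonoid.smul_def, Algebra.smul_def, map_mul, hψ, hψG]
  simp [hmkx]

/-- Let `R = ⊕_{i≥0} R_i` be a Noetherian graded ring, `M` a
finitely generated graded `R`-module, `x ∈ R_1` non-nilpotent and
`A = R/(1−x)`.  Then `tr_R(M)·A = tr_A(M ⊗_R A)`. -/
theorem traceIdeal_map_dehomogenization
    (R : Type*) [CommRing R] [IsNoetherianRing R]
    (𝒜 : ℕ → AddSubgroup R) [GradedRing 𝒜]
    (M : Type*) [AddCommGroup M] [Module R M] [Module.Finite R M]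
    (ℳ : ℕ → AddSubgroup M) [SetLike.GradedSMul 𝒜 ℳ] [DirectSum.Decomposition ℳ]
    (x : R) (hx : x ∈ 𝒜 1) (hnil : ¬ IsNilpotent x) :
    (traceIdeal R M).map (Ideal.Quotient.mk (Ideal.span {1 - x})) =
      traceIdeal (R ⧸ Ideal.span {1 - x}) ((R ⧸ Ideal.span {1 - x}) ⊗[R] M) := by
  apply le_antisymm
  · rw [Ideal.map_le_iff_le_comap]
    refine iSup_le fun f => ?_
    rintro _ ⟨m, rfl⟩
    rw [Ideal.mem_comap]
    let F : M →ₗ[R] R ⧸ Ideal.span {1 - x} :=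
      (Algebra.linearMap R (R ⧸ Ideal.span {1 - x})).comp f
    refine le_iSup (fun f : ((R ⧸ Ideal.span {1 - x}) ⊗[R] M) →ₗ[R ⧸ Ideal.span {1 - x}]
      (R ⧸ Ideal.span {1 - x}) => LinearMap.range f)
      (F.liftBaseChange (R ⧸ Ideal.span {1 - x})) ⟨1 ⊗ₜ m, ?_⟩
    rw [LinearMap.liftBaseChange_tmul, one_smul]
    rfl
  · refine iSup_le fun g => ?_
    rintro _ ⟨t, rfl⟩
    obtain ⟨f, hf⟩ := hom_lift_aux R 𝒜 M ℳ x hx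
      ((g.restrictScalars R).comp (TensorProduct.mk R (R ⧸ Ideal.span {1 - x}) M 1))
    induction t using TensorProduct.induction_on with
    | zero => rw [map_zero]; exact Ideal.zero_mem _
    | add a b ha hb => rw [map_add]; exact Ideal.add_mem _ ha hb
    | tmul a m =>
      have h : g (a ⊗ₜ m) = a * g (1 ⊗ₜ m) := by
        rw [← smul_eq_mul, ← map_smul, TensorProduct.smul_tmul', smul_eq_mul, mul_one]
      rw [h]
      refine Ideal.mul_mem_left _ _ ?_
      have h2 : g (1 ⊗ₜ m) = Ideal.Quotient.mk (Ideal.span {1 - x}) (f m) := (hf m).symm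
      rw [h2]
      exact Ideal.mem_map_of_mem _
        (le_iSup (fun f : M →ₗ[R] R => LinearMap.range f) f ⟨m, rfl⟩)

end
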